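/- Let δ(x, y) = y³ − y·x³ (an E₇-type singular impasse curve). Let X = (P, Q) be real-analytic on a neighborhood of the origin in ℝ² with Q(0,0) ≠ 0. Then the constrained system (X, δ) is orientation-preserving C⁰-orbitally equivalent at (0, 0) to the constrained system (Y, δ), where Y is the constant vector field Y ≡ (P(0,0), Q(0,0)). -/

import Mathlib

/-- A phase curve of the vector field `X` in the set `V`: a differentiable curve
`c : J → V` on a nondegenerate interval `J` with `c'(t) = X(c(t))` for all `t ∈ J`. -/
def IsPhaseCurve (X : ℝ × ℝ → ℝ × ℝ) (V : Set (ℝ × ℝ)) (J : Set ℝ) (c : ℝ → ℝ × ℝ) : Prop :=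
  J.OrdConnected ∧ J.Nontrivial ∧ (∀ t ∈ J, c t ∈ V) ∧
    ∀ t ∈ J, HasDerivWithinAt c (X (c t)) J t

/-- The planar constrained systems `(X, δ)` and `(Y, γ)` are orientation-preserving
`C⁰`-orbitally equivalent at `(p₁, p₂)`: there are open neighborhoods `V₁ ∋ p₁`, `V₂ ∋ p₂`
and a homeomorphism `Φ : V₁ → V₂` sending `p₁` to `p₂` and impasse set to impasse set, which
carries phase curves of `X` off the impasse set onto phase curves of `Y` off the impasse set
up to continuous strictly increasing reparametrizations, and conversely for `Φ⁻¹`. -/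
def OrbitallyEquivAt (X : ℝ × ℝ → ℝ × ℝ) (δ : ℝ × ℝ → ℝ) (p₁ : ℝ × ℝ)
    (Y : ℝ × ℝ → ℝ × ℝ) (γ : ℝ × ℝ → ℝ) (p₂ : ℝ × ℝ) : Prop :=
  ∃ (V₁ V₂ : Set (ℝ × ℝ)) (Φ Φinv : ℝ × ℝ → ℝ × ℝ),
    IsOpen V₁ ∧ IsOpen V₂ ∧ p₁ ∈ V₁ ∧ p₂ ∈ V₂ ∧
    -- Φ is a homeomorphism from V₁ onto V₂ with inverse Φinv
    ContinuousOn Φ V₁ ∧ ContinuousOn Φinv V₂ ∧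
    Set.MapsTo Φ V₁ V₂ ∧ Set.MapsTo Φinv V₂ V₁ ∧
    (∀ z ∈ V₁, Φinv (Φ z) = z) ∧ (∀ z ∈ V₂, Φ (Φinv z) = z) ∧
    Φ p₁ = p₂ ∧
    -- Φ maps the impasse set to the impasse set
    Φ '' ({z | δ z = 0} ∩ V₁) = {z | γ z = 0} ∩ V₂ ∧
    -- Φ maps phase curves of X to phase curves of Y, preserving orientation
    (∀ (J : Set ℝ) (c : ℝ → ℝ × ℝ),
      IsPhaseCurve X (V₁ \ {z | δ z = 0}) J c →
      ∃ (J' : Set ℝ) (d : ℝ → ℝ × ℝ) (τ : ℝ → ℝ),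
        IsPhaseCurve Y (V₂ \ {z | γ z = 0}) J' d ∧
        ContinuousOn τ J ∧ StrictMonoOn τ J ∧ τ '' J = J' ∧
        ∀ t ∈ J, Φ (c t) = d (τ t)) ∧
    -- Φ⁻¹ maps phase curves of Y to phase curves of X, preserving orientation
    (∀ (J : Set ℝ) (d : ℝ → ℝ × ℝ),
      IsPhaseCurve Y (V₂ \ {z | γ z = 0}) J d →
      ∃ (J' : Set ℝ) (c : ℝ → ℝ × ℝ) (τ : ℝ → ℝ),
        IsPhaseCurve X (V₁ \ {z | δ z = 0}) J' c ∧
        ContinuousOn τ J ∧ StrictMonoOn τ J ∧ τ '' J = J' ∧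
        ∀ t ∈ J, Φinv (d t) = c (τ t))

/-! Dividing `X` by `X.2 / q` only changes time and turns it into `(q * g, q)` with a Lipschitz
slope `g`, whose orbits `x = φ y s` are graphs over the `y`-axis. In the coordinates `(s, y)` the
field is `(0, q)`. The branches `y = ± x ^ (3 / 2)` of the cusp have slope zero at the vertex, so
near it they are transversal to the orbits: they are met once by each orbit, at heights that depend
continuously on `s` and vanish for `s ≤ 0` only. Stretching each orbit piecewise linearly moves
these heights to `± s ^ (3 / 2)` and fixes the height `0`, which recovers the original impasse set
for the vertical field. Hence every `X` is equivalent to `(0, q)` as soon as `X.2` and `q` have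
the same sign at the origin. -/

open Set Filter Topology
open scoped NNReal

section FiberwiseOrderIso

variable {X α β : Type*} [TopologicalSpace X]
  [LinearOrder α] [TopologicalSpace α] [OrderTopology α]
  [LinearOrder β] [TopologicalSpace β] [OrderTopology β]

theorem continuous_uncurry_orderIso_symm {f : X → α ≃o β} (hf : ∀ a, Continuous fun x => f x a) :
    Continuous fun z : X × β => (f z.1).symm z.2 := by
  refine OrderTopology.continuous_iff.2 fun a => ⟨?_, ?_⟩
  · simpa only [preimage, mem_Ioi, OrderIso.lt_symm_apply, Function.comp_apply] using
      isOpen_lt ((hf a).comp continuous_fst) continuous_snd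
  · simpa only [preimage, mem_Iio, OrderIso.symm_apply_lt, Function.comp_apply] using
      isOpen_lt continuous_snd ((hf a).comp continuous_fst)

theorem continuous_uncurry_orderIso {f : X → α ≃o β} (hf : ∀ a, Continuous fun x => f x a) :
    Continuous fun z : X × α => f z.1 z.2 :=
  continuous_uncurry_orderIso_symm (f := fun x => (f x).symm) fun b =>
    (continuous_uncurry_orderIso_symm hf).comp (.prodMk_left b)

/-- The homeomorphism `(x, a) ↦ (x, f x a)` of a family of order isomorphisms that depends
pointwise continuously on the parameter. -/
@[simps]
def fiberwiseHomeomorph (f : X → α ≃o β) (hf : ∀ a, Continuous fun x => f x a) :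
    X × α ≃ₜ X × β where
  toFun z := (z.1, f z.1 z.2)
  invFun z := (z.1, (f z.1).symm z.2)
  left_inv z := by simp
  right_inv z := by simp
  continuous_toFun := continuous_fst.prodMk (continuous_uncurry_orderIso hf)
  continuous_invFun := continuous_fst.prodMk (continuous_uncurry_orderIso_symm hf)

end FiberwiseOrderIso

section OrbitalEquivalence

variable {X Y Z : ℝ × ℝ → ℝ × ℝ} {δ γ η : ℝ × ℝ → ℝ} {p p₁ p₂ p₃ : ℝ × ℝ}
  {Φ Ψ : ℝ × ℝ → ℝ × ℝ} {U W : Set (ℝ × ℝ)}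

/-- `Φ` carries the phase curves of `X` in `U` onto phase curves of `Y`, up to a continuous
strictly increasing change of time. The image curves are not confined to a subset of the plane, so
that the property is monotone in `U`. -/
def MapsPhaseCurves (Φ X : ℝ × ℝ → ℝ × ℝ) (U : Set (ℝ × ℝ)) (Y : ℝ × ℝ → ℝ × ℝ) : Prop :=
  ∀ (J : Set ℝ) (c : ℝ → ℝ × ℝ), IsPhaseCurve X U J c →
    ∃ (J' : Set ℝ) (d : ℝ → ℝ × ℝ) (τ : ℝ → ℝ), IsPhaseCurve Y univ J' d ∧
      ContinuousOn τ J ∧ StrictMonoOn τ J ∧ τ '' J = J' ∧ ∀ t ∈ J, Φ (c t) = d (τ t)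

theorem MapsPhaseCurves.mono (h : MapsPhaseCurves Φ X W Y) (hUW : U ⊆ W) :
    MapsPhaseCurves Φ X U Y :=
  fun J c ⟨hJ, hJ', hcU, hc⟩ => h J c ⟨hJ, hJ', fun t ht => hUW (hcU t ht), hc⟩

theorem MapsPhaseCurves.comp (hΨ : MapsPhaseCurves Ψ Y W Z) (hΦ : MapsPhaseCurves Φ X U Y)
    (hUW : MapsTo Φ U W) : MapsPhaseCurves (Ψ ∘ Φ) X U Z := by
  intro J c hc
  obtain ⟨_, d, τ, ⟨hJ', hJ'', -, hd⟩, hτc, hτm, rfl, hτ⟩ := hΦ J c hc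
  have hdW : ∀ s ∈ τ '' J, d s ∈ W := by
    rintro _ ⟨t, ht, rfl⟩
    exact hτ t ht ▸ hUW (hc.2.2.1 t ht)
  obtain ⟨J'', e, σ, he, hσc, hσm, hσJ, hσ⟩ := hΨ _ d ⟨hJ', hJ'', hdW, hd⟩
  exact ⟨J'', e, σ ∘ τ, he, hσc.comp hτc (mapsTo_image τ J), hσm.comp hτm (mapsTo_image τ J),
    image_comp σ τ J ▸ hσJ, fun t ht => by
      rw [Function.comp_apply, hτ t ht, hσ _ (mem_image_of_mem τ ht), Function.comp_apply]⟩

theorem mapsPhaseCurves_iff_of_mapsTo (hUW : MapsTo Φ U W) :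
    MapsPhaseCurves Φ X U Y ↔ ∀ (J : Set ℝ) (c : ℝ → ℝ × ℝ), IsPhaseCurve X U J c →
      ∃ (J' : Set ℝ) (d : ℝ → ℝ × ℝ) (τ : ℝ → ℝ), IsPhaseCurve Y W J' d ∧
        ContinuousOn τ J ∧ StrictMonoOn τ J ∧ τ '' J = J' ∧ ∀ t ∈ J, Φ (c t) = d (τ t) := by
  refine forall₂_congr fun J c => forall_congr' fun hc => ⟨?_, ?_⟩
  · rintro ⟨_, d, τ, ⟨hJ', hJ'', -, hd⟩, hτc, hτm, rfl, hτ⟩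
    refine ⟨_, d, τ, ⟨hJ', hJ'', ?_, hd⟩, hτc, hτm, rfl, hτ⟩
    rintro _ ⟨t, ht, rfl⟩
    exact hτ t ht ▸ hUW (hc.2.2.1 t ht)
  · rintro ⟨J', d, τ, ⟨hJ', hJ'', -, hd⟩, hτ⟩
    exact ⟨J', d, τ, ⟨hJ', hJ'', fun _ _ => mem_univ _, hd⟩, hτ⟩

theorem orbitallyEquivAt_iff : OrbitallyEquivAt X δ p₁ Y γ p₂ ↔
    ∃ e : OpenPartialHomeomorph (ℝ × ℝ) (ℝ × ℝ), p₁ ∈ e.source ∧ e p₁ = p₂ ∧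
      e.IsImage {z | δ z = 0} {z | γ z = 0} ∧
      MapsPhaseCurves e X (e.source \ {z | δ z = 0}) Y ∧
      MapsPhaseCurves e.symm Y (e.target \ {z | γ z = 0}) X := by
  have mapsTo_diff {e : OpenPartialHomeomorph (ℝ × ℝ) (ℝ × ℝ)} {s t : Set (ℝ × ℝ)}
      (h : e.IsImage s t) : MapsTo e (e.source \ s) (e.target \ t) := by
    simpa only [sdiff_eq] using h.compl.mapsTo
  constructor
  · rintro ⟨V₁, V₂, Φ, Ψ, hV₁, hV₂, hp₁, -, hΦc, hΨc, hΦ, hΨ, hΨΦ, hΦΨ, hp, hδ, hXY, hYX⟩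
    let e : OpenPartialHomeomorph (ℝ × ℝ) (ℝ × ℝ) :=
      ⟨⟨⟨Φ, Ψ, V₁, V₂, hΦ, hΨ, hΨΦ, hΦΨ⟩, hΦc, hΨc⟩, hV₁, hV₂⟩
    have he : e.IsImage {z | δ z = 0} {z | γ z = 0} :=
      .of_image_eq (by rw [inter_comm, inter_comm e.target]; exact hδ)
    exact ⟨e, hp₁, hp, he, (mapsPhaseCurves_iff_of_mapsTo (mapsTo_diff he)).2 hXY,
      (mapsPhaseCurves_iff_of_mapsTo (mapsTo_diff he.symm)).2 hYX⟩
  · rintro ⟨e, hp₁, hp, he, hXY, hYX⟩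
    exact ⟨e.source, e.target, e, e.symm, e.open_source, e.open_target, hp₁,
      hp ▸ e.map_source hp₁, e.continuousOn, e.continuousOn_symm, e.mapsTo, e.symm.mapsTo,
      fun _ => e.left_inv, fun _ => e.right_inv, hp,
      by rw [inter_comm, inter_comm _ e.target]; exact he.image_eq,
      (mapsPhaseCurves_iff_of_mapsTo (mapsTo_diff he)).1 hXY,
      (mapsPhaseCurves_iff_of_mapsTo (mapsTo_diff he.symm)).1 hYX⟩

theorem OrbitallyEquivAt.symm (h : OrbitallyEquivAt X δ p₁ Y γ p₂) :
    OrbitallyEquivAt Y γ p₂ X δ p₁ := by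
  obtain ⟨e, hp₁, rfl, he, hXY, hYX⟩ := orbitallyEquivAt_iff.1 h
  exact orbitallyEquivAt_iff.2 ⟨e.symm, e.map_source hp₁, e.left_inv hp₁, he.symm, hYX, hXY⟩

theorem OrbitallyEquivAt.trans (h : OrbitallyEquivAt X δ p₁ Y γ p₂)
    (h' : OrbitallyEquivAt Y γ p₂ Z η p₃) : OrbitallyEquivAt X δ p₁ Z η p₃ := by
  obtain ⟨e, hp₁, rfl, he, hXY, hYX⟩ := orbitallyEquivAt_iff.1 h
  obtain ⟨f, hp₂, rfl, hf, hYZ, hZY⟩ := orbitallyEquivAt_iff.1 h'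
  have hsource : (e.trans f).source = e.source ∩ e ⁻¹' f.source := e.trans_source f
  have htarget : (e.trans f).target = f.target ∩ f.symm ⁻¹' e.target := e.trans_target f
  refine orbitallyEquivAt_iff.2 ⟨e.trans f, hsource ▸ ⟨hp₁, hp₂⟩, rfl, ?_,
    hYZ.comp (hXY.mono ?_) ?_, hYX.comp (hZY.mono ?_) ?_⟩
  · intro z hz
    rw [hsource] at hz
    exact (hf hz.2).trans (he hz.1)
  · exact sdiff_subset_sdiff_left (hsource ▸ inter_subset_left)
  · rintro z ⟨hz, hδ⟩
    rw [hsource] at hz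
    exact ⟨hz.2, fun h => hδ ((he hz.1).1 h)⟩
  · exact sdiff_subset_sdiff_left (htarget ▸ inter_subset_left)
  · rintro z ⟨hz, hη⟩
    rw [htarget] at hz
    exact ⟨hz.2, fun h => hη ((hf.symm hz.1).1 h)⟩

theorem OrbitallyEquivAt.of_homeomorph (e : ℝ × ℝ ≃ₜ ℝ × ℝ) (hU : U ∈ 𝓝 p) (hW : W ∈ 𝓝 (e p))
    (he : ∀ᶠ z in 𝓝 p, γ (e z) = 0 ↔ δ z = 0) (hXY : MapsPhaseCurves e X U Y)
    (hYX : MapsPhaseCurves e.symm Y W X) : OrbitallyEquivAt X δ p Y γ (e p) := by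
  obtain ⟨V, hV, hVo, hpV⟩ := eventually_nhds_iff.1
    ((he.and (eventually_mem_set.2 hU)).and (e.continuous.continuousAt.eventually_mem hW))
  refine orbitallyEquivAt_iff.2 ⟨e.toOpenPartialHomeomorphOfImageEq V hVo (e '' V) rfl, hpV, rfl,
    fun z hz => (hV z hz).1.1, hXY.mono fun z hz => (hV z hz.1).1.2, hYX.mono ?_⟩
  rintro _ ⟨⟨z, hz, rfl⟩, -⟩
  exact (hV z hz).2

end OrbitalEquivalence

section TimeChange

variable {J : Set ℝ} {τ r : ℝ → ℝ}

theorem exists_hasDerivWithinAt_of_continuousOn {E : Type*} [NormedAddCommGroup E]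
    [NormedSpace ℝ E] [CompleteSpace E] (hJ : J.OrdConnected) {f : ℝ → E}
    (hf : ContinuousOn f J) : ∃ F : ℝ → E, ∀ t ∈ J, HasDerivWithinAt F (f t) J t := by
  rcases J.eq_empty_or_nonempty with rfl | ⟨t₀, ht₀⟩
  · exact ⟨0, fun t ht => ht.elim⟩
  refine ⟨fun t => ∫ s in t₀..t, f s, fun t ht => ?_⟩
  have : TendstoIxxClass Icc (𝓝[J] t) (𝓝[J] t) := tendstoIxxClass_inf
  have : TendstoIxxClass Ioc (𝓝[J] t) (𝓝[J] t) :=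
    tendstoIxxClass_of_subset fun _ _ => Ioc_subset_Icc_self
  have : intervalIntegral.FTCFilter t (𝓝[J] t) (𝓝[J] t) :=
    { pure_le := pure_le_nhdsWithin ht
      le_nhds := nhdsWithin_le_nhds
      meas_gen := hJ.measurableSet.nhdsWithin_isMeasurablyGenerated t }
  exact intervalIntegral.integral_hasDerivWithinAt_right
    (hf.mono (hJ.uIcc_subset ht₀ ht)).intervalIntegrable
    (hf.stronglyMeasurableAtFilter_nhdsWithin hJ.measurableSet t) (hf t ht)

theorem continuousOn_invFunOn_of_strictMonoOn (hJ : J.OrdConnected) (hτc : ContinuousOn τ J)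
    (hτ : StrictMonoOn τ J) : ContinuousOn (Function.invFunOn τ J) (τ '' J) := by
  have : (τ '' J).OrdConnected := (hJ.isPreconnected.image τ hτc).ordConnected
  have h : (τ '' J).domRestrict (Function.invFunOn τ J) =
      fun s => ((hτ.orderIso τ J).symm s : ℝ) := by
    ext s
    obtain ⟨t, rfl⟩ := (hτ.orderIso τ J).surjective s
    rw [OrderIso.symm_apply_apply]
    exact hτ.injOn.leftInvOn_invFunOn t.2
  rw [continuousOn_iff_continuous_domRestrict, h]
  exact continuous_subtype_val.comp (OrderIso.continuous _)

theorem hasDerivWithinAt_invFunOn (hJ : J.OrdConnected) (hτ : StrictMonoOn τ J)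
    (hτr : ∀ t ∈ J, HasDerivWithinAt τ (r t) J t) {t : ℝ} (ht : t ∈ J) (hr : r t ≠ 0) :
    HasDerivWithinAt (Function.invFunOn τ J) (r t)⁻¹ (τ '' J) (τ t) := by
  have hτt : HasFDerivWithinAt τ
      (ContinuousLinearEquiv.unitsEquivAut ℝ (Units.mk0 (r t) hr) : ℝ →L[ℝ] ℝ) J
      (Function.invFunOn τ J (τ t)) := by
    rw [hτ.injOn.leftInvOn_invFunOn ht]
    exact hτr t ht
  have hcont := continuousOn_invFunOn_of_strictMonoOn hJ
    (fun t ht => (hτr t ht).continuousWithinAt) hτ _ (mem_image_of_mem τ ht)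
  exact hτt.of_local_left_inverse
    (hcont.tendsto_nhdsWithin (surjOn_image τ J).mapsTo_invFunOn) (mem_image_of_mem τ ht)
    (eventually_mem_nhdsWithin.mono fun s hs => Function.invFunOn_eq hs)

theorem MapsPhaseCurves.id_of_eq_smul {X Y : ℝ × ℝ → ℝ × ℝ} {U : Set (ℝ × ℝ)} {r : ℝ × ℝ → ℝ}
    (hr : ContinuousOn r U) (hr₀ : ∀ z ∈ U, 0 < r z) (hXY : ∀ z ∈ U, X z = r z • Y z) :
    MapsPhaseCurves id X U Y := by
  rintro J c ⟨hJ, hJ', hcU, hc⟩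
  obtain ⟨τ, hτ⟩ := exists_hasDerivWithinAt_of_continuousOn hJ
    (hr.comp (fun t ht => (hc t ht).continuousWithinAt) hcU)
  have hτc : ContinuousOn τ J := fun t ht => (hτ t ht).continuousWithinAt
  have hτm : StrictMonoOn τ J := strictMonoOn_of_hasDerivWithinAt_pos hJ.convex hτc
    (fun t ht => (hτ t (interior_subset ht)).mono interior_subset)
    fun t ht => hr₀ _ (hcU t (interior_subset ht))
  have hleft := hτm.injOn.leftInvOn_invFunOn
  refine ⟨τ '' J, c ∘ Function.invFunOn τ J, τ,
    ⟨(hJ.isPreconnected.image τ hτc).ordConnected, hJ'.image_of_injOn hτm.injOn,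
      fun _ _ => mem_univ _, ?_⟩, hτc, hτm, rfl, fun t ht => by simp [hleft ht]⟩
  rintro _ ⟨t, ht, rfl⟩
  have hr' := (hr₀ _ (hcU t ht)).ne'
  have hvalue : Y ((c ∘ Function.invFunOn τ J) (τ t)) = (r (c t))⁻¹ • X (c t) := by
    rw [Function.comp_apply, hleft ht, hXY _ (hcU t ht), inv_smul_smul₀ hr']
  rw [hvalue]
  exact (hc t ht).scomp_of_eq (τ t) (hasDerivWithinAt_invFunOn hJ hτm hτ ht hr')
    (surjOn_image τ J).mapsTo_invFunOn (hleft ht).symm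

theorem OrbitallyEquivAt.of_eventually_eq_smul {X Y : ℝ × ℝ → ℝ × ℝ} {p : ℝ × ℝ} {r : ℝ × ℝ → ℝ}
    (δ : ℝ × ℝ → ℝ) (hr : ∀ᶠ z in 𝓝 p, ContinuousAt r z) (hr₀ : 0 < r p)
    (hXY : ∀ᶠ z in 𝓝 p, X z = r z • Y z) : OrbitallyEquivAt X δ p Y δ p := by
  have hpos : ∀ᶠ z in 𝓝 p, 0 < r z := hr.self_of_nhds.eventually_const_lt hr₀
  obtain ⟨U, hU, hrU⟩ := eventually_iff_exists_mem.1 (hr.and (hpos.and hXY))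
  have hcont : ContinuousOn r U := fun z hz => (hrU z hz).1.continuousWithinAt
  refine .of_homeomorph (.refl _) hU hU (.of_forall fun _ => Iff.rfl)
    (.id_of_eq_smul hcont (fun z hz => (hrU z hz).2.1) fun z hz => (hrU z hz).2.2)
    (.id_of_eq_smul (hcont.inv₀ fun z hz => (hrU z hz).2.1.ne')
      (fun z hz => inv_pos.2 (hrU z hz).2.1) fun z hz => ?_)
  rw [(hrU z hz).2.2, Pi.inv_apply, inv_smul_smul₀ (hrU z hz).2.1.ne']

end TimeChange

section GlobalFlow

variable {E : Type*} [NormedAddCommGroup E] [NormedSpace ℝ E] {v : ℝ → E → E} {K M : ℝ≥0}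

theorem eqOn_of_isIntegralCurveOn {J : Set ℝ} (hJ : J.OrdConnected)
    (hv : ∀ t ∈ J, LipschitzWith K (v t)) {f g : ℝ → E} (hf : IsIntegralCurveOn f v J)
    (hg : IsIntegralCurveOn g v J) {t₀ : ℝ} (ht₀ : t₀ ∈ J) (h : f t₀ = g t₀) : EqOn f g J := by
  intro t ht
  rcases le_total t₀ t with hle | hle
  · have hsub : Icc t₀ t ⊆ J := hJ.out ht₀ ht
    have deriv_right {f : ℝ → E} (hf : IsIntegralCurveOn f v J) :
        ∀ u ∈ Ico t₀ t, HasDerivWithinAt f (v u (f u)) (Ici u) u := fun u hu =>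
      ((hf u (hsub ⟨hu.1, hu.2.le⟩)).mono hsub).mono_of_mem_nhdsWithin (Icc_mem_nhdsGE_of_mem hu)
    exact ODE_solution_unique_of_mem_Icc_right (s := fun _ => univ)
      (fun u hu => (hv u (hsub ⟨hu.1, hu.2.le⟩)).lipschitzOnWith)
      (hf.continuousOn.mono hsub) (deriv_right hf) (fun _ _ => mem_univ _)
      (hg.continuousOn.mono hsub) (deriv_right hg) (fun _ _ => mem_univ _) h ⟨hle, le_rfl⟩
  · have hsub : Icc t t₀ ⊆ J := hJ.out ht ht₀
    have deriv_left {f : ℝ → E} (hf : IsIntegralCurveOn f v J) :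
        ∀ u ∈ Ioc t t₀, HasDerivWithinAt f (v u (f u)) (Iic u) u := fun u hu =>
      ((hf u (hsub ⟨hu.1.le, hu.2⟩)).mono hsub).mono_of_mem_nhdsWithin (Icc_mem_nhdsLE_of_mem hu)
    exact ODE_solution_unique_of_mem_Icc_left (s := fun _ => univ)
      (fun u hu => (hv u (hsub ⟨hu.1.le, hu.2⟩)).lipschitzOnWith)
      (hf.continuousOn.mono hsub) (deriv_left hf) (fun _ _ => mem_univ _)
      (hg.continuousOn.mono hsub) (deriv_left hg) (fun _ _ => mem_univ _) h ⟨le_rfl, hle⟩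

theorem exists_isIntegralCurveOn_Icc [CompleteSpace E] (hv : ∀ t, LipschitzWith K (v t))
    (hvc : ∀ x, Continuous (v · x)) (hM : ∀ t x, ‖v t x‖ ≤ M) (t₀ : ℝ) (x₀ : E) (T : ℝ≥0) :
    ∃ α : ℝ → E, α t₀ = x₀ ∧ IsIntegralCurveOn α v (Icc (t₀ - T) (t₀ + T)) := by
  have hpicard : IsPicardLindelof v (tmin := t₀ - T) (tmax := t₀ + T) ⟨t₀, by simp⟩ x₀
      (M * T) 0 M K :=
    { lipschitzOnWith := fun t _ => (hv t).lipschitzOnWith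
      continuousOn := fun x _ => (hvc x).continuousOn
      norm_le := fun t _ x _ => hM t x
      mul_max_le := by simp }
  exact hpicard.exists_eq_forall_mem_Icc_hasDerivWithinAt₀

theorem exists_isIntegralCurve_of_bounded [CompleteSpace E] (hv : ∀ t, LipschitzWith K (v t))
    (hvc : ∀ x, Continuous (v · x)) (hM : ∀ t x, ‖v t x‖ ≤ M) (t₀ : ℝ) (x₀ : E) :
    ∃ α : ℝ → E, α t₀ = x₀ ∧ IsIntegralCurve α v := by
  choose β hβ₀ hβ using exists_isIntegralCurveOn_Icc hv hvc hM t₀ x₀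
  have hβ_eq {S T : ℝ≥0} (hST : S ≤ T) : EqOn (β S) (β T) (Icc (t₀ - S) (t₀ + S)) :=
    eqOn_of_isIntegralCurveOn ordConnected_Icc (fun t _ => hv t) (hβ S)
      ((hβ T).mono (Icc_subset_Icc (by gcongr) (by gcongr))) (t₀ := t₀) (by simp)
      ((hβ₀ S).trans (hβ₀ T).symm)
  let radius (t : ℝ) : ℝ≥0 := ‖t - t₀‖₊
  have mem_radius (t : ℝ) : t ∈ Icc (t₀ - radius t) (t₀ + radius t) := by
    rw [← Real.closedBall_eq_Icc, Metric.mem_closedBall, dist_eq_norm]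
    exact le_rfl
  refine ⟨fun t => β (radius t) t, hβ₀ _, fun t => ?_⟩
  have hnhds : Icc (t₀ - ↑(radius t + 1)) (t₀ + ↑(radius t + 1)) ∈ 𝓝 t := by
    rw [← Real.closedBall_eq_Icc]
    refine Metric.closedBall_mem_nhds_of_mem ?_
    rw [Metric.mem_ball, dist_eq_norm]
    exact lt_add_one ‖t - t₀‖
  have hglue : (fun s => β (radius s) s) =ᶠ[𝓝 t] β (radius t + 1) := by
    filter_upwards [hnhds] with s hs
    refine hβ_eq ?_ (mem_radius s)
    rwa [← Real.closedBall_eq_Icc, Metric.mem_closedBall, dist_eq_norm] at hs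
  have := ((hβ (radius t + 1) t (mem_of_mem_nhds hnhds)).hasDerivAt hnhds).congr_of_eventuallyEq
    hglue
  rwa [← hglue.self_of_nhds] at this

theorem exists_orderIso_isIntegralCurve {v : ℝ → ℝ → ℝ} (hv : ∀ t, LipschitzWith K (v t))
    (hvc : ∀ x, Continuous (v · x)) (hM : ∀ t x, ‖v t x‖ ≤ M) (t₀ : ℝ) :
    ∃ φ : ℝ → ℝ ≃o ℝ, (∀ s, φ t₀ s = s) ∧ ∀ s, IsIntegralCurve (φ · s) v := by
  choose α hα₀ hα using exists_isIntegralCurve_of_bounded hv hvc hM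
  have hα_eq {t₁ x₁ t₂ x₂ t : ℝ} (h : α t₁ x₁ t = α t₂ x₂ t) : α t₁ x₁ = α t₂ x₂ :=
    ODE_solution_unique_univ (fun t => (hv t).lipschitzOnWith) (fun t => ⟨hα _ _ t, mem_univ _⟩)
      (fun t => ⟨hα _ _ t, mem_univ _⟩) h
  have hmono (t : ℝ) : StrictMono (α t₀ · t) := by
    intro s s' hs
    by_contra! hle
    obtain ⟨u, hu⟩ : 0 ∈ range fun u => α t₀ s' u - α t₀ s u :=
      mem_range_of_exists_le_of_exists_ge ((hα t₀ s').continuous.sub (hα t₀ s).continuous)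
        ⟨t, sub_nonpos.2 hle⟩ ⟨t₀, by rw [hα₀, hα₀]; exact sub_nonneg.2 hs.le⟩
    have : s' = s := by rw [← hα₀ t₀ s', hα_eq (sub_eq_zero.1 hu), hα₀]
    exact hs.ne' this
  have hsurj (t : ℝ) : Function.Surjective (α t₀ · t) := fun x =>
    ⟨α t x t₀, (congrFun (hα_eq (hα₀ t₀ (α t x t₀))) t).trans (hα₀ t x)⟩
  exact ⟨fun t => (hmono t).orderIsoOfSurjective _ (hsurj t), hα₀ t₀, hα t₀⟩

end GlobalFlow

section FlowBox

variable {K M : ℝ≥0}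

theorem IsPhaseCurve.eqOn_of_isIntegralCurve {Y : ℝ × ℝ → ℝ × ℝ} {U : Set (ℝ × ℝ)} {J : Set ℝ}
    {c d : ℝ → ℝ × ℝ} (hc : IsPhaseCurve Y U J c) (hY : LipschitzWith K Y)
    (hd : IsIntegralCurve d fun _ => Y) {t₀ : ℝ} (ht₀ : t₀ ∈ J) (h : c t₀ = d t₀) : EqOn c d J :=
  eqOn_of_isIntegralCurveOn hc.1 (fun _ _ => hY) hc.2.2.2 (hd.isIntegralCurveOn J) ht₀ h

theorem isIntegralCurve_add_smul (p w : ℝ × ℝ) :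
    IsIntegralCurve (fun t : ℝ => p + t • w) fun _ _ => w := fun t => by
  simpa using ((hasDerivAt_id t).smul_const w).const_add p

theorem IsPhaseCurve.exists_eqOn_add_smul {w : ℝ × ℝ} {U : Set (ℝ × ℝ)} {J : Set ℝ}
    {c : ℝ → ℝ × ℝ} (hc : IsPhaseCurve (fun _ => w) U J c) :
    ∃ p, EqOn c (fun t => p + t • w) J := by
  obtain ⟨t₀, ht₀⟩ := hc.2.1.nonempty
  exact ⟨c t₀ - t₀ • w, hc.eqOn_of_isIntegralCurve (.const w)
    (isIntegralCurve_add_smul _ w) ht₀ (sub_add_cancel _ _).symm⟩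

theorem OrbitallyEquivAt.of_isIntegralCurve_line {Y : ℝ × ℝ → ℝ × ℝ} (hY : LipschitzWith K Y)
    {w : ℝ × ℝ} (e : ℝ × ℝ ≃ₜ ℝ × ℝ)
    (he : ∀ p, IsIntegralCurve (fun t => e (p + t • w)) fun _ => Y) (γ : ℝ × ℝ → ℝ) (p : ℝ × ℝ) :
    OrbitallyEquivAt (fun _ => w) (γ ∘ e) p Y γ (e p) := by
  refine .of_homeomorph e univ_mem univ_mem (.of_forall fun _ => Iff.rfl) ?_ ?_
  · intro J c hc
    obtain ⟨p, hp⟩ := hc.exists_eqOn_add_smul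
    exact ⟨J, _, id, ⟨hc.1, hc.2.1, fun _ _ => mem_univ _, (he p).isIntegralCurveOn J⟩,
      continuousOn_id, strictMono_id.strictMonoOn J, image_id J, fun t ht => by rw [hp ht]; rfl⟩
  · intro J c hc
    obtain ⟨t₀, ht₀⟩ := hc.2.1.nonempty
    have hline : EqOn c (fun t => e (e.symm (c t₀) - t₀ • w + t • w)) J :=
      hc.eqOn_of_isIntegralCurve hY (he _) ht₀ (by simp)
    exact ⟨J, _, id,
      ⟨hc.1, hc.2.1, fun _ _ => mem_univ _, (isIntegralCurve_add_smul _ w).isIntegralCurveOn J⟩,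
      continuousOn_id, strictMono_id.strictMonoOn J, image_id J, fun t ht => by
        rw [hline ht, e.symm_apply_apply]; rfl⟩

theorem OrbitallyEquivAt.of_slope_field {g : ℝ × ℝ → ℝ} (hg : LipschitzWith K g) {φ : ℝ → ℝ ≃o ℝ}
    (hφ : ∀ s, IsIntegralCurve (φ · s) fun y x => g (x, y)) (q : ℝ) (δ : ℝ × ℝ → ℝ) (p : ℝ × ℝ) :
    OrbitallyEquivAt (fun _ => (0, q)) (fun z => δ (φ z.2 z.1, z.2)) p
      (fun z => (q * g z, q)) δ (φ p.2 p.1, p.2) := by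
  have hfield : LipschitzWith (max (‖q‖₊ * K) 0) fun z => (q * g z, q) :=
    ((lipschitzWith_smul q).comp hg).prodMk (.const q)
  refine .of_isIntegralCurve_line hfield ((Homeomorph.prodComm ℝ ℝ).trans
    ((fiberwiseHomeomorph φ fun s => (hφ s).continuous).trans (.prodComm ℝ ℝ)))
    (fun p t => ?_) δ p
  have hy : HasDerivAt (fun t => p.2 + t * q) q t := by
    simpa using ((hasDerivAt_id t).mul_const q).const_add p.2
  have hx := (hφ p.1 (p.2 + t * q)).scomp t hy
  simpa [Function.comp_def] using hx.prodMk hy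

theorem exists_flow_of_slope_field {g : ℝ × ℝ → ℝ} (hg : LipschitzWith K g) (hM : ∀ z, ‖g z‖ ≤ M) :
    ∃ φ : ℝ → ℝ ≃o ℝ, (∀ s, φ 0 s = s) ∧ (∀ s, LipschitzWith M (φ · s)) ∧
      ∀ s, IsIntegralCurve (φ · s) fun y x => g (x, y) := by
  obtain ⟨φ, hφ₀, hφ⟩ := exists_orderIso_isIntegralCurve (v := fun y x => g (x, y))
    (fun y => by simpa [Function.comp_def] using hg.comp (LipschitzWith.prodMk_right y))
    (fun x => hg.continuous.comp (.prodMk_right x)) (fun y x => hM (x, y)) 0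
  refine ⟨φ, hφ₀, fun s => ?_, hφ⟩
  exact lipschitzWith_of_nnnorm_deriv_le (fun y => (hφ s y).differentiableAt)
    fun y => (hφ s y).deriv ▸ hM _

end FlowBox

section Transversal

/-- On the orbit `s`, the graph of `k` is met where `x` is the fixed point of the contraction
`x ↦ φ (k x) s`. -/
theorem exists_orderIso_eq_iff_of_lipschitzWith {Y : Type*} [PseudoEMetricSpace Y] {M L : ℝ≥0}
    {φ : Y → ℝ ≃o ℝ} {k : ℝ → Y} (hφ : ∀ s, LipschitzWith M (φ · s)) (hk : LipschitzWith L k)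
    (hML : M * L < 1) : ∃ a : ℝ ≃o ℝ, ∀ s x, a s = x ↔ φ (k x) s = x := by
  have hcontr (s : ℝ) : ContractingWith (M * L) fun x => φ (k x) s := ⟨hML, (hφ s).comp hk⟩
  have hmono : StrictMono fun x => (φ (k x)).symm x := by
    intro x x' hx
    by_contra! hle
    set s := (φ (k x)).symm x with hs
    have hx' : x' ≤ φ (k x') s := (φ (k x')).symm_apply_le.1 hle
    have hdist := (hcontr s).toLipschitzWith.dist_le_mul x' x
    rw [Real.dist_eq, Real.dist_eq, abs_of_pos (sub_pos.2 hx), hs, OrderIso.apply_symm_apply,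
      ← hs] at hdist
    have : ((M * L : ℝ≥0) : ℝ) * (x' - x) < 1 * (x' - x) :=
      mul_lt_mul_of_pos_right (mod_cast hML) (sub_pos.2 hx)
    linarith [le_abs_self (φ (k x') s - x)]
  have hsurj : Function.Surjective fun x => (φ (k x)).symm x := fun s =>
    ⟨(hcontr s).fixedPoint, (φ _).symm_apply_eq.2 (hcontr s).fixedPoint_isFixedPt.symm⟩
  refine ⟨(hmono.orderIsoOfSurjective _ hsurj).symm, fun s x => ?_⟩
  rw [OrderIso.symm_apply_eq, eq_comm]
  exact (φ (k x)).symm_apply_eq.trans eq_comm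

theorem exists_orderIso_graph_iff {M L : ℝ≥0} {φ : ℝ → ℝ ≃o ℝ} {k : ℝ → ℝ}
    (hφ : ∀ s, LipschitzWith M (φ · s)) (hk : LipschitzWith L k) (hML : M * L < 1)
    (h₀ : φ (k 0) 0 = 0) :
    ∃ a : ℝ ≃o ℝ, a 0 = 0 ∧ ∀ s y, y = k (φ y s) ↔ y = k (a s) := by
  obtain ⟨a, ha⟩ := exists_orderIso_eq_iff_of_lipschitzWith hφ hk hML
  refine ⟨a, (ha 0 0).2 h₀, fun s y => ⟨fun hy => ?_, ?_⟩⟩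
  · rw [(ha s (φ y s)).2 (by rw [← hy])]
    exact hy
  · rintro rfl
    rw [(ha s (a s)).1 rfl]

end Transversal

section Stretch

/-- The piecewise linear map of the line that fixes `(-∞, 0]`, stretches `[0, u]` linearly onto
`[0, w]` and has slope one beyond `u`. Since `y / 0 = 0`, it is the identity
for `u = w = 0`. -/
noncomputable def stretch (u w y : ℝ) : ℝ :=
  y - max 0 (min y u) + w * max 0 (min (y / u) 1)

variable {u w y : ℝ}

theorem stretch_of_nonpos (hu : 0 ≤ u) (hy : y ≤ 0) : stretch u w y = y := by
  simp [stretch, hy, div_nonpos_of_nonpos_of_nonneg hy hu]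

theorem stretch_of_mem_Icc (hy : y ∈ Icc 0 u) : stretch u w y = w * (y / u) := by
  have hu := hy.1.trans hy.2
  simp [stretch, hy.1, hy.2, div_nonneg hy.1 hu, div_le_one_of_le₀ hy.2 hu]

theorem stretch_of_le (hu : 0 < u) (hy : u ≤ y) : stretch u w y = y - u + w := by
  simp [stretch, hy, hu.le, (one_le_div hu).2 hy]

theorem stretch_self (hu : 0 ≤ u) (h : u = 0 → w = 0) : stretch u w u = w := by
  rcases hu.eq_or_lt with rfl | hu
  · rw [stretch_of_nonpos le_rfl le_rfl, h rfl]
  · rw [stretch_of_le hu le_rfl, sub_self, zero_add]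

theorem monotone_stretch (hu : 0 ≤ u) (hw : 0 ≤ w) : Monotone (stretch u w) := by
  have hclamp : Monotone fun y => y - max 0 (min y u) := fun y y' h => by grind
  exact hclamp.add fun y y' h => by gcongr

theorem leftInverse_stretch (hu : 0 ≤ u) (hw : 0 ≤ w) (h : u = 0 ↔ w = 0) :
    Function.LeftInverse (stretch w u) (stretch u w) := by
  intro y
  rcases hu.eq_or_lt with rfl | hu
  · simp [stretch, h.1 rfl]
  have hw : 0 < w := hw.lt_of_ne' (mt h.2 hu.ne')
  rcases le_total y 0 with hy | hy
  · rw [stretch_of_nonpos hu.le hy, stretch_of_nonpos hw.le hy]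
  rcases le_total y u with hyu | hyu
  · have hle : w * (y / u) ≤ w := mul_le_of_le_one_right hw.le ((div_le_one hu).2 hyu)
    rw [stretch_of_mem_Icc ⟨hy, hyu⟩, stretch_of_mem_Icc ⟨by positivity, hle⟩]
    field_simp
  · rw [stretch_of_le hu hyu, stretch_of_le hw (by linarith)]
    ring

theorem strictMono_stretch (hu : 0 ≤ u) (hw : 0 ≤ w) (h : u = 0 ↔ w = 0) :
    StrictMono (stretch u w) :=
  (monotone_stretch hu hw).strictMono_of_injective (leftInverse_stretch hu hw h).injective

theorem continuous_stretch {X : Type*} [TopologicalSpace X] {u w : X → ℝ} (hu : Continuous u)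
    (hw : Continuous w) (hu₀ : ∀ x, u x = 0 → w x = 0) (y : ℝ) :
    Continuous fun x => stretch (u x) (w x) y := by
  refine (continuous_const.sub (continuous_const.max (continuous_const.min hu))).add
    (continuous_iff_continuousAt.2 fun x => ?_)
  by_cases hx : u x = 0
  · have hw₀ : Tendsto w (𝓝 x) (𝓝 0) := hu₀ x hx ▸ hw.tendsto x
    have hbdd : ∀ r : ℝ, ‖max 0 (min r 1)‖ ≤ 1 := fun r => by
      rw [Real.norm_of_nonneg (le_max_left _ _)]
      exact max_le zero_le_one (min_le_right _ _)
    rw [ContinuousAt, hu₀ x hx, zero_mul]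
    exact hw₀.zero_mul_isBoundedUnder_le (isBoundedUnder_of ⟨1, fun _ => hbdd _⟩)
  · exact hw.continuousAt.mul (continuousAt_const.max
      ((continuousAt_const.div hu.continuousAt hx).min continuousAt_const))

theorem exists_orderIso_stretch {X : Type*} [TopologicalSpace X] {u w : X → ℝ}
    (hu : Continuous u) (hw : Continuous w) (hu₀ : ∀ x, 0 ≤ u x) (hw₀ : ∀ x, 0 ≤ w x)
    (huw : ∀ x, u x = 0 ↔ w x = 0) :
    ∃ S : X → ℝ ≃o ℝ, (∀ y, Continuous fun x => S x y) ∧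
      ∀ x, (∀ y ≤ 0, S x y = y) ∧ S x (u x) = w x := by
  exact ⟨fun x => (strictMono_stretch (hu₀ x) (hw₀ x) (huw x)).orderIsoOfRightInverse _ _
    (leftInverse_stretch (hw₀ x) (hu₀ x) (huw x).symm),
    continuous_stretch hu hw fun x => (huw x).1,
    fun x => ⟨fun y => stretch_of_nonpos (hu₀ x), stretch_self (hu₀ x) (huw x).1⟩⟩

theorem exists_orderIso_stretch_two_sided {X : Type*} [TopologicalSpace X] {l u w : X → ℝ}
    (hl : Continuous l) (hu : Continuous u) (hw : Continuous w) (hl₀ : ∀ x, 0 ≤ l x)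
    (hu₀ : ∀ x, 0 ≤ u x) (hw₀ : ∀ x, 0 ≤ w x) (hlw : ∀ x, l x = 0 ↔ w x = 0)
    (huw : ∀ x, u x = 0 ↔ w x = 0) :
    ∃ S : X → ℝ ≃o ℝ, (∀ y, Continuous fun x => S x y) ∧
      ∀ x, S x 0 = 0 ∧ S x (u x) = w x ∧ S x (-l x) = -w x := by
  obtain ⟨S, hSc, hS⟩ := exists_orderIso_stretch hu hw hu₀ hw₀ huw
  obtain ⟨T, hTc, hT⟩ := exists_orderIso_stretch hl hw hl₀ hw₀ hlw
  let reflect (f : ℝ ≃o ℝ) : ℝ ≃o ℝ := ((OrderIso.neg ℝ).trans f.dual).trans (OrderIso.neg ℝ).symm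
  have reflect_apply (f : ℝ ≃o ℝ) (y : ℝ) : reflect f y = -f (-y) := rfl
  refine ⟨fun x => (S x).trans (reflect (T x)), fun y => ?_, fun x => ?_⟩
  · simp only [OrderIso.trans_apply, reflect_apply]
    exact ((continuous_uncurry_orderIso hTc).comp (continuous_id.prodMk (hSc y).neg)).neg
  · simp only [OrderIso.trans_apply, reflect_apply]
    rw [(hS x).1 0 le_rfl, (hS x).2, (hS x).1 (-l x) (neg_nonpos.2 (hl₀ x)), neg_zero, neg_neg,
      (hT x).1 0 le_rfl, (hT x).1 (-w x) (neg_nonpos.2 (hw₀ x)), (hT x).2]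
    exact ⟨neg_zero, neg_neg _, rfl⟩

end Stretch

section VerticalField

variable {q : ℝ} {H : ℝ → ℝ ≃o ℝ}

theorem mapsPhaseCurves_fiberwiseHomeomorph (hq : q ≠ 0) (hH : ∀ y, Continuous fun x => H x y) :
    MapsPhaseCurves (fiberwiseHomeomorph H hH) (fun _ => (0, q)) univ fun _ => (0, q) := by
  intro J c hc
  obtain ⟨⟨s, y⟩, hsy⟩ := hc.exists_eqOn_add_smul
  let τ (t : ℝ) : ℝ := H s (y + t * q) / q
  have hτ : StrictMono τ := fun t t' ht => by
    rcases hq.lt_or_gt with hq | hq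
    · exact div_lt_div_of_neg_of_lt hq ((H s).strictMono (by nlinarith))
    · exact div_lt_div_of_pos_right ((H s).strictMono (by gcongr)) hq
  have hτc : Continuous τ := ((H s).continuous.comp (by fun_prop)).div_const q
  refine ⟨τ '' J, fun t => (s, 0) + t • (0, q), τ,
    ⟨(hc.1.isPreconnected.image τ hτc.continuousOn).ordConnected, hc.2.1.image hτ.injective,
      fun _ _ => mem_univ _, (isIntegralCurve_add_smul _ _).isIntegralCurveOn _⟩,
    hτc.continuousOn, hτ.strictMonoOn J, rfl, fun t ht => ?_⟩
  simp [hsy ht, τ, div_mul_cancel₀ _ hq]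

theorem OrbitallyEquivAt.of_fiberwise_orderIso (hq : q ≠ 0) (hH : ∀ y, Continuous fun x => H x y)
    {δ γ : ℝ × ℝ → ℝ} {p : ℝ × ℝ}
    (hδγ : ∀ᶠ z in 𝓝 p, γ (z.1, H z.1 z.2) = 0 ↔ δ z = 0) :
    OrbitallyEquivAt (fun _ => (0, q)) δ p (fun _ => (0, q)) γ (p.1, H p.1 p.2) := by
  have hH' (y : ℝ) : Continuous fun x => (H x).symm y :=
    (continuous_uncurry_orderIso_symm hH).comp (.prodMk_left y)
  exact .of_homeomorph (fiberwiseHomeomorph H hH) univ_mem univ_mem hδγ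
    (mapsPhaseCurves_fiberwiseHomeomorph hq hH) (mapsPhaseCurves_fiberwiseHomeomorph hq hH')

end VerticalField

section Cusp

/-- The upper branch `y = x ^ (3 / 2)` of the cusp `y² = x³`, extended by zero to `x < 0`. -/
noncomputable def cusp (x : ℝ) : ℝ := √x ^ 3

theorem cusp_eq_zero_iff {x : ℝ} : cusp x = 0 ↔ x ≤ 0 := by
  rw [cusp, pow_eq_zero_iff three_ne_zero, Real.sqrt_eq_zero']

theorem cusp_nonneg (x : ℝ) : 0 ≤ cusp x := pow_nonneg x.sqrt_nonneg 3

theorem continuous_cusp : Continuous cusp := Real.continuous_sqrt.pow 3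

theorem pow_three_sub_mul_pow_three_eq_zero_iff {x y : ℝ} :
    y ^ 3 - y * x ^ 3 = 0 ↔ y = 0 ∨ y = cusp x ∨ y = -cusp x := by
  have hfactor : y ^ 3 - y * x ^ 3 = y * (y ^ 2 - x ^ 3) := by ring
  rw [hfactor, mul_eq_zero]
  rcases lt_or_ge x 0 with hx | hx
  · have : y ^ 2 - x ^ 3 ≠ 0 := by nlinarith [sq_nonneg y, pow_pos (neg_pos.2 hx) 3]
    simp [this, cusp_eq_zero_iff.2 hx.le]
  · have : cusp x ^ 2 = x ^ 3 := by rw [cusp, pow_right_comm, Real.sq_sqrt hx]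
    rw [← this, sub_eq_zero, sq_eq_sq_iff_eq_or_eq_neg]

theorem pow_three_sub_pow_three_le {a b r : ℝ} (hb : 0 ≤ b) (hba : b ≤ a) (har : a ≤ r) :
    a ^ 3 - b ^ 3 ≤ 2 * r * (a ^ 2 - b ^ 2) := by
  have h : a ^ 2 + a * b + b ^ 2 ≤ 2 * r * (a + b) := by nlinarith
  nlinarith [mul_le_mul_of_nonneg_left h (sub_nonneg.2 hba)]

theorem lipschitzWith_cusp_min (e : ℝ≥0) :
    LipschitzWith (2 * NNReal.sqrt e) fun x => cusp (min x e) := by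
  refine .of_le_add_mul _ fun x y => ?_
  have hdist : max (min x e) 0 - max (min y e) 0 ≤ dist x y := by
    rw [Real.dist_eq]
    grind
  rw [← Real.sq_sqrt', ← Real.sq_sqrt'] at hdist
  rcases le_total (√(min x e)) √(min y e) with hle | hle
  · have : cusp (min x e) ≤ cusp (min y e) := pow_le_pow_left₀ (Real.sqrt_nonneg _) hle 3
    exact this.trans (le_add_of_nonneg_right (by positivity))
  · have hcube := pow_three_sub_pow_three_le (Real.sqrt_nonneg _) hle
      (Real.sqrt_le_sqrt (min_le_right x e))
    have := mul_le_mul_of_nonneg_left hdist (by positivity : 0 ≤ 2 * √(e : ℝ))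
    rw [cusp, cusp, NNReal.coe_mul, NNReal.coe_ofNat, Real.coe_sqrt]
    linarith

end Cusp

section Slope

theorem exists_lipschitzWith_bounded_eventuallyEq {E : Type*} [PseudoMetricSpace E] {K : ℝ≥0}
    {f : E → ℝ} {s : Set E} {p : E} (hs : s ∈ 𝓝 p) (hf : LipschitzOnWith K f s) :
    ∃ (M : ℝ≥0) (g : E → ℝ), LipschitzWith K g ∧ (∀ z, ‖g z‖ ≤ M) ∧ f =ᶠ[𝓝 p] g := by
  obtain ⟨g, hg, hfg⟩ := hf.extend_real
  let M : ℝ≥0 := ‖g p‖₊ + 1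
  refine ⟨M, fun z => max (-M) (min (g z) M), (hg.min_const M).const_max (-M), fun z => ?_, ?_⟩
  · exact abs_le.2 ⟨le_max_left _ _, max_le (neg_le_self M.2) (min_le_right _ _)⟩
  · have hbound : ∀ᶠ z in 𝓝 p, ‖g z‖ < M :=
      hg.continuous.norm.continuousAt.eventually_lt_const (lt_add_one ‖g p‖)
    filter_upwards [hs, hbound] with z hz hgz
    obtain ⟨hlower, hupper⟩ := abs_lt.1 hgz
    rw [hfg hz, min_eq_left hupper.le, max_eq_right hlower.le]

theorem exists_lipschitzWith_bounded_slope {E : Type*} [PseudoMetricSpace E] {K : ℝ≥0}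
    {X : E → ℝ × ℝ} {s : Set E} {p : E} (hs : s ∈ 𝓝 p) (hX : LipschitzOnWith K X s)
    (hp : (X p).2 ≠ 0) :
    ∃ (L M : ℝ≥0) (g : E → ℝ), LipschitzWith L g ∧ (∀ z, ‖g z‖ ≤ M) ∧
      ∀ᶠ z in 𝓝 p, (X z).1 = g z * (X z).2 := by
  have hdiv : ContDiffAt ℝ 1 (fun w : ℝ × ℝ => w.1 / w.2) (X p) :=
    contDiffAt_fst.div contDiffAt_snd hp
  obtain ⟨L, t, ht, hL⟩ := hdiv.exists_lipschitzOnWith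
  have hXp : ContinuousAt X p := hX.continuousOn.continuousAt hs
  obtain ⟨M, g, hg, hM, hXg⟩ := exists_lipschitzWith_bounded_eventuallyEq
    (inter_mem hs (hXp.preimage_mem_nhds ht))
    (hL.comp (hX.mono inter_subset_left) fun z hz => hz.2)
  refine ⟨L * K, M, g, hg, hM, ?_⟩
  filter_upwards [hXg, hXp.snd.eventually_ne hp] with z hz hz₀
  exact (div_eq_iff hz₀).1 hz

end Slope

theorem exists_pos_mul_two_mul_sqrt_lt_one (M : ℝ≥0) :
    ∃ e : ℝ≥0, 0 < e ∧ M * (2 * NNReal.sqrt e) < 1 := by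
  refine ⟨(1 / (2 * M + 1)) ^ 2, by positivity, ?_⟩
  rw [NNReal.sqrt_sq, mul_left_comm, ← mul_assoc, mul_one_div, div_lt_one (by positivity)]
  exact lt_add_one _

theorem exists_cusp_eq_iff {M : ℝ≥0} {φ : ℝ → ℝ ≃o ℝ} (hφ : ∀ s, LipschitzWith M (φ · s))
    (hφ₀ : φ 0 0 = 0) :
    ∃ u : ℝ → ℝ, Continuous u ∧ (∀ s, 0 ≤ u s) ∧ (∀ s, u s = 0 ↔ cusp s = 0) ∧
      ∀ᶠ z : ℝ × ℝ in 𝓝 0, z.2 = cusp (φ z.2 z.1) ↔ z.2 = u z.1 := by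
  obtain ⟨e, he, hMe⟩ := exists_pos_mul_two_mul_sqrt_lt_one M
  have hk : cusp (min 0 e) = 0 := cusp_eq_zero_iff.2 (min_le_left _ _)
  obtain ⟨a, ha₀, ha⟩ := exists_orderIso_graph_iff hφ (lipschitzWith_cusp_min e) hMe
    (by rw [hk, hφ₀])
  refine ⟨fun s => cusp (min (a s) e), continuous_cusp.comp (a.continuous.min continuous_const),
    fun s => cusp_nonneg _, fun s => ?_, ?_⟩
  · have ha_nonpos : a s ≤ 0 ↔ s ≤ 0 := by rw [← a.le_iff_le (x := s), ha₀]
    have he' : ¬(e : ℝ) ≤ 0 := not_le.2 he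
    rw [cusp_eq_zero_iff, cusp_eq_zero_iff, min_le_iff, or_iff_left he', ha_nonpos]
  · have hφc := (continuous_uncurry_orderIso fun s => (hφ s).continuous).comp continuous_swap
    have hφe : ∀ᶠ z : ℝ × ℝ in 𝓝 0, φ z.2 z.1 < e :=
      hφc.continuousAt.eventually_lt_const (hφ₀.trans_lt he)
    filter_upwards [hφe] with z hz
    rw [← ha z.1 z.2, min_eq_left hz.le]

theorem exists_orderIso_pow_three_sub_mul_pow_three_eq_zero_iff {M : ℝ≥0} {φ : ℝ → ℝ ≃o ℝ}
    (hφ : ∀ s, LipschitzWith M (φ · s)) (hφ₀ : φ 0 0 = 0) :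
    ∃ H : ℝ → ℝ ≃o ℝ, (∀ y, Continuous fun s => H s y) ∧ H 0 0 = 0 ∧
      ∀ᶠ z : ℝ × ℝ in 𝓝 0, H z.1 z.2 ^ 3 - H z.1 z.2 * z.1 ^ 3 = 0 ↔
        z.2 ^ 3 - z.2 * φ z.2 z.1 ^ 3 = 0 := by
  obtain ⟨u, huc, hu₀, hu, hφu⟩ := exists_cusp_eq_iff hφ hφ₀
  obtain ⟨l, hlc, hl₀, hl, hφl⟩ := exists_cusp_eq_iff (φ := fun y => φ (-y))
    (fun s => by simpa [Function.comp_def] using (hφ s).comp LipschitzWith.id.neg)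
    (by simpa using hφ₀)
  obtain ⟨H, hHc, hH⟩ := exists_orderIso_stretch_two_sided hlc huc continuous_cusp hl₀ hu₀
    cusp_nonneg hl hu
  have reflect : Tendsto (fun z : ℝ × ℝ => (z.1, -z.2)) (𝓝 0) (𝓝 0) :=
    (continuous_fst.prodMk continuous_snd.neg).tendsto' _ _ (by simp)
  refine ⟨H, hHc, (hH 0).1, ?_⟩
  filter_upwards [hφu, reflect.eventually hφl] with ⟨s, y⟩ hyu hyl
  obtain ⟨hH₀, hHu, hHl⟩ := hH s
  have hH_iff {y₁ y₂ : ℝ} (h : H s y₁ = y₂) : H s y = y₂ ↔ y = y₁ := h ▸ (H s).apply_eq_iff_eq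
  rw [neg_neg, neg_eq_iff_eq_neg, neg_eq_iff_eq_neg] at hyl
  simp only [pow_three_sub_mul_pow_three_eq_zero_iff, hH_iff hH₀, hH_iff hHu, hH_iff hHl, hyu, hyl]

theorem orbitallyEquivAt_vertical_of_lipschitzOnWith {K : ℝ≥0} {X : ℝ × ℝ → ℝ × ℝ}
    {s : Set (ℝ × ℝ)} (hs : s ∈ 𝓝 0) (hX : LipschitzOnWith K X s) {q : ℝ} (hq : 0 < (X 0).2 * q) :
    OrbitallyEquivAt X (fun z => z.2 ^ 3 - z.2 * z.1 ^ 3) 0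
      (fun _ => (0, q)) (fun z => z.2 ^ 3 - z.2 * z.1 ^ 3) 0 := by
  have hq₀ : q ≠ 0 := right_ne_zero_of_mul hq.ne'
  obtain ⟨L, M, g, hg, hM, hXg⟩ :=
    exists_lipschitzWith_bounded_slope hs hX (left_ne_zero_of_mul hq.ne')
  obtain ⟨φ, hφ₀, hφM, hφ⟩ := exists_flow_of_slope_field hg hM
  obtain ⟨H, hHc, hH₀, hH⟩ := exists_orderIso_pow_three_sub_mul_pow_three_eq_zero_iff hφM (hφ₀ 0)
  have hXc : ∀ᶠ z in 𝓝 0, ContinuousAt X z :=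
    (eventually_mem_nhds_iff.2 hs).mono fun z hz => hX.continuousOn.continuousAt hz
  let δ : ℝ × ℝ → ℝ := fun z => z.2 ^ 3 - z.2 * z.1 ^ 3
  have rescale : OrbitallyEquivAt X δ 0 (fun z => (q * g z, q)) δ 0 := by
    refine .of_eventually_eq_smul δ (r := fun z => (X z).2 / q)
      (hXc.mono fun z hz => hz.snd.div_const q) (div_pos_iff.2 (mul_pos_iff.1 hq)) ?_
    filter_upwards [hXg] with z hz
    ext <;> simp [field, hz]
  have straighten : OrbitallyEquivAt (fun z => (q * g z, q)) δ 0
      (fun _ => (0, q)) (fun z => δ (φ z.2 z.1, z.2)) 0 := by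
    simpa only [Prod.fst_zero, Prod.snd_zero, hφ₀, Prod.mk_zero_zero] using
      (OrbitallyEquivAt.of_slope_field hg hφ q δ 0).symm
  have align : OrbitallyEquivAt (fun _ => (0, q)) (fun z => δ (φ z.2 z.1, z.2)) 0
      (fun _ => (0, q)) δ 0 := by
    simpa only [Prod.fst_zero, Prod.snd_zero, hH₀, Prod.mk_zero_zero] using
      OrbitallyEquivAt.of_fiberwise_orderIso (δ := fun z => δ (φ z.2 z.1, z.2)) (γ := δ) (p := 0)
        hq₀ hHc hH
  exact rescale.trans (straighten.trans align)

theorem E7_case7_general {K L : ℝ≥0} {X Y : ℝ × ℝ → ℝ × ℝ} {s t : Set (ℝ × ℝ)}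
    (hs : s ∈ 𝓝 0) (hX : LipschitzOnWith K X s) (ht : t ∈ 𝓝 0) (hY : LipschitzOnWith L Y t)
    (hXY : 0 < (X 0).2 * (Y 0).2) :
    OrbitallyEquivAt X (fun z => z.2 ^ 3 - z.2 * z.1 ^ 3) 0
      Y (fun z => z.2 ^ 3 - z.2 * z.1 ^ 3) 0 :=
  (orbitallyEquivAt_vertical_of_lipschitzOnWith hs hX hXY).trans
    (orbitallyEquivAt_vertical_of_lipschitzOnWith ht hY
      (mul_self_pos.2 (right_ne_zero_of_mul hXY.ne'))).symm

/-- (`E₇`-type impasse curve, Case 7 of Table 2.)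
If `δ(x,y) = y³ − y·x³` and `X = (P,Q)` is real-analytic near the origin with `Q(0,0) ≠ 0`,
then `(X, δ)` is orientation-preserving `C⁰`-orbitally equivalent at the origin to the system
with constant adjoint vector field `(P(0,0), Q(0,0))`. -/
theorem E7_case7 (P Q : ℝ × ℝ → ℝ)
    (hP : AnalyticAt ℝ P (0, 0)) (hQ : AnalyticAt ℝ Q (0, 0))
    (hQ0 : Q (0, 0) ≠ 0) :
    OrbitallyEquivAt (fun z => (P z, Q z))
      (fun z => z.2 ^ 3 - z.2 * z.1 ^ 3) (0, 0)
      (fun _ => (P (0, 0), Q (0, 0)))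
      (fun z => z.2 ^ 3 - z.2 * z.1 ^ 3) (0, 0) := by
  obtain ⟨K, s, hs, hX⟩ := (hP.prod hQ).contDiffAt.exists_lipschitzOnWith
  exact E7_case7_general hs hX univ_mem (LipschitzWith.const _).lipschitzOnWith
    (mul_self_pos.2 hQ0)
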